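/- arXiv:1708.03403 — 7 statements merged into one kernel-verified Lean document; each statement's English description precedes it below -/
import Mathlib

section
/- Every SLO is sp-embeddable into the complex algebra of a frame: for every SLO A of signature 𝓡 there exist a frame F of signature 𝓡 and an sp-embedding of A into the complex algebra F*. -/
/-- Strictly positive modal formulas over a signature `Sig`:
propositional variables, `⊤`, conjunction, and a diamond `◇_r` for each `r : Sig`. -/
inductive SP (Sig : Type) : Type
  | var : ℕ → SP Sig
  | top : SP Sig
  | and : SP Sig → SP Sig → SP Sig
  | dia : Sig → SP Sig → SP Sig

/-- An sp-implication `σ → τ` is a pair of sp-formulas. -/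
abbrev SPImp (Sig : Type) := SP Sig × SP Sig

/-- A SLO of signature `Sig`: a meet-semilattice with a greatest element,
equipped with a monotone unary operator for each element of the signature. -/
structure SLO (Sig : Type) where
  carrier : Type
  [instInf : SemilatticeInf carrier]
  [instTop : OrderTop carrier]
  dia : Sig → carrier → carrier
  mono : ∀ r : Sig, Monotone (dia r)

attribute [instance] SLO.instInf SLO.instTop

namespace SLO

variable {Sig : Type}

/-- Evaluation of an sp-formula in a SLO under a valuation of the variables. -/
def eval (A : SLO Sig) (v : ℕ → A.carrier) : SP Sig → A.carrier
  | .var n => v n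
  | .top => ⊤
  | .and φ ψ => eval A v φ ⊓ eval A v ψ
  | .dia r φ => A.dia r (eval A v φ)

/-- A SLO validates an sp-implication `σ → τ` if under every valuation
the value of `σ` is below the value of `τ`. -/
def Valid (A : SLO Sig) (ι : SPImp Sig) : Prop :=
  ∀ v : ℕ → A.carrier, eval A v ι.1 ≤ eval A v ι.2

/-- A SLO validates a set of sp-implications. -/
def ValidSet (A : SLO Sig) (Ax : Set (SPImp Sig)) : Prop :=
  ∀ ι ∈ Ax, Valid A ι

end SLO

/-- A Kripke frame: a nonempty type of worlds with a binary accessibility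
relation for each element of the signature. -/
structure KFrame (Sig : Type) where
  world : Type
  [instNonempty : Nonempty world]
  rel : Sig → world → world → Prop

attribute [instance] KFrame.instNonempty

namespace KFrame

variable {Sig : Type}

/-- Truth of an sp-formula at a world of a Kripke model `(F, v)`. -/
def truth (F : KFrame Sig) (v : ℕ → Set F.world) : SP Sig → F.world → Prop
  | .var n, w => w ∈ v n
  | .top, _ => True
  | .and φ ψ, w => truth F v φ w ∧ truth F v ψ w
  | .dia r φ, w => ∃ u, F.rel r w u ∧ truth F v φ u

/-- A frame validates an sp-implication `σ → τ` if in every Kripke model on it,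
at every world, truth of `σ` implies truth of `τ`. -/
def Valid (F : KFrame Sig) (ι : SPImp Sig) : Prop :=
  ∀ (v : ℕ → Set F.world) (w : F.world), truth F v ι.1 w → truth F v ι.2 w

/-- A frame validates a set of sp-implications. -/
def ValidSet (F : KFrame Sig) (Ax : Set (SPImp Sig)) : Prop :=
  ∀ ι ∈ Ax, Valid F ι

/-- The complex algebra `F*` of a frame, as a SLO: all subsets of the worlds,
with intersection as meet, the whole set as `⊤`, and
`◇_r X = {w | ∃ u ∈ X, rel r w u}`. -/
def cmpl (F : KFrame Sig) : SLO Sig where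
  carrier := Set F.world
  dia r X := {w | ∃ u ∈ X, F.rel r w u}
  mono r := by
    intro X Y hXY w hw
    obtain ⟨u, hu, hr⟩ := hw
    exact ⟨u, hXY hu, hr⟩

end KFrame

/-- An sp-embedding between SLOs: an injective map preserving `⊤`,
binary meets, and each operator. -/
def IsSpEmbedding {Sig : Type} (A B : SLO Sig) (η : A.carrier → B.carrier) : Prop :=
  Function.Injective η ∧ η ⊤ = ⊤ ∧
    (∀ a b : A.carrier, η (a ⊓ b) = η a ⊓ η b) ∧
    ∀ (r : Sig) (a : A.carrier), η (A.dia r a) = B.dia r (η a)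

/-- `Ax ⊨_Kr ι`: every frame validating every member of `Ax` validates `ι`. -/
def KrCons {Sig : Type} (Ax : Set (SPImp Sig)) (ι : SPImp Sig) : Prop :=
  ∀ F : KFrame Sig, F.ValidSet Ax → F.Valid ι

/-- `Ax ⊨_SLO ι`: every SLO validating every member of `Ax` validates `ι`. -/
def SLOCons {Sig : Type} (Ax : Set (SPImp Sig)) (ι : SPImp Sig) : Prop :=
  ∀ A : SLO Sig, A.ValidSet Ax → A.Valid ι

/-- The spi-logic axiomatised by `Ax` is complete:
`Ax ⊨_Kr ι` iff `Ax ⊨_SLO ι` for every sp-implication `ι`. -/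
def IsCompleteLogic {Sig : Type} (Ax : Set (SPImp Sig)) : Prop :=
  ∀ ι : SPImp Sig, KrCons Ax ι ↔ SLOCons Ax ι

/-- The spi-logic axiomatised by `Ax` is complex: every SLO validating every
member of `Ax` sp-embeds into the complex algebra of some frame validating
every member of `Ax`. -/
def IsComplexLogic {Sig : Type} (Ax : Set (SPImp Sig)) : Prop :=
  ∀ A : SLO Sig, A.ValidSet Ax →
    ∃ F : KFrame Sig, F.ValidSet Ax ∧
      ∃ η : A.carrier → (KFrame.cmpl F).carrier, IsSpEmbedding A (KFrame.cmpl F) η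

/-- The unimodal diamond. -/
def SP.d (φ : SP Unit) : SP Unit := SP.dia () φ

/-- `p → ◇p` (reflexivity). -/
def e_refl : SPImp Unit := (SP.var 0, (SP.var 0).d)

/-- `◇◇p → ◇p` (transitivity). -/
def e_trans : SPImp Unit := (((SP.var 0).d).d, (SP.var 0).d)

/-- `q ∧ ◇p → ◇(p ∧ ◇q)` (symmetry). -/
def e_sym : SPImp Unit :=
  ((SP.var 1).and ((SP.var 0).d), ((SP.var 0).and ((SP.var 1).d)).d)

/-!
Take the elements of the algebra themselves as worlds, let `w` see `u` when `w ≤ ◇u`, and send `a`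
to its principal down-set. If `w ≤ ◇a`, then `a` itself is a successor of `w` in the image of `a`;
conversely, `w ≤ ◇u` and `u ≤ a` give `w ≤ ◇a` by monotonicity.
-/

theorem Iic_apply_eq_setOf_exists_le {α β : Type*} [Preorder α] [Preorder β] {f : α → β}
    (hf : Monotone f) (a : α) : Set.Iic (f a) = {w | ∃ u ∈ Set.Iic a, w ≤ f u} :=
  Set.Subset.antisymm (fun _ hw => ⟨a, le_rfl, hw⟩) fun _ ⟨_, hu, hw⟩ => hw.trans (hf hu)

namespace SLO

variable {Sig : Type}

/-- The canonical frame of a SLO, into whose complex algebra the SLO embeds. An element stands for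
the principal filter it generates, so `w ≤ ◇u` encodes that `◇b` is in the filter of `w` for every
`b` in the filter of `u`. -/
def canonicalFrame (A : SLO Sig) : KFrame Sig where
  world := A.carrier
  instNonempty := ⟨⊤⟩
  rel r w u := w ≤ A.dia r u

theorem isSpEmbedding_Iic (A : SLO Sig) :
    IsSpEmbedding A A.canonicalFrame.cmpl (Set.Iic : A.carrier → Set A.carrier) :=
  ⟨Set.Iic_injective, Set.Iic_top, fun _ _ => Set.Iic_inter_Iic.symm,
    fun r => Iic_apply_eq_setOf_exists_le (A.mono r)⟩

end SLO

/-- Every SLO is sp-embeddable into the complex algebra of a frame. -/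
theorem every_SLO_embeddable {Sig : Type} (A : SLO Sig) :
    ∃ F : KFrame Sig,
      ∃ η : A.carrier → (KFrame.cmpl F).carrier, IsSpEmbedding A (KFrame.cmpl F) η :=
  ⟨A.canonicalFrame, Set.Iic, A.isSpEmbedding_Iic⟩
end

section
/- If the spi-logic axiomatised by a set Σ of sp-implications is complex and Σ₀ is a set of variable-free sp-implications, then the spi-logic axiomatised by Σ ∪ Σ₀ is complex. -/
/-- An sp-formula is variable-free if it contains no propositional variables. -/
def SP.VarFree {Sig : Type} : SP Sig → Prop
  | .var _ => False
  | .top => True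
  | .and φ ψ => φ.VarFree ∧ ψ.VarFree
  | .dia _ φ => φ.VarFree

/-! Replacing every variable by `⊤` only increases the value of an sp-formula, so an implication
with variable-free consequent holds in a SLO exactly when it holds under the valuation `⊤`.
Homomorphisms of SLOs carry this valuation to itself, and hence preserve such implications; in
particular, a frame whose complex algebra receives an embedding of a SLO inherits them. -/

/-- A homomorphism of SLOs: a map preserving `⊤`, binary meets and every operator,
that is, an sp-embedding without injectivity. -/
structure IsSpHom {Sig : Type} (A B : SLO Sig) (f : A.carrier → B.carrier) : Prop where
  map_top : f ⊤ = ⊤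
  map_inf : ∀ a b, f (a ⊓ b) = f a ⊓ f b
  map_dia : ∀ r a, f (A.dia r a) = B.dia r (f a)

theorem IsSpEmbedding.isSpHom {Sig : Type} {A B : SLO Sig} {η : A.carrier → B.carrier}
    (hη : IsSpEmbedding A B η) : IsSpHom A B η where
  map_top := hη.2.1
  map_inf := hη.2.2.1
  map_dia := hη.2.2.2

namespace IsSpHom

variable {Sig : Type} {A B : SLO Sig} {f : A.carrier → B.carrier}

theorem monotone (hf : IsSpHom A B f) : Monotone f := fun a b hab => by
  rw [← inf_eq_left, ← hf.map_inf, inf_eq_left.mpr hab]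

theorem map_eval (hf : IsSpHom A B f) (v : ℕ → A.carrier) (φ : SP Sig) :
    f (A.eval v φ) = B.eval (f ∘ v) φ := by
  induction φ with
  | var n => rfl
  | top => exact hf.map_top
  | and φ ψ ihφ ihψ => simp only [SLO.eval, hf.map_inf, ihφ, ihψ]
  | dia r φ ih => simp only [SLO.eval, hf.map_dia, ih]

theorem map_eval_top (hf : IsSpHom A B f) (φ : SP Sig) : f (A.eval ⊤ φ) = B.eval ⊤ φ := by
  have comp_top : f ∘ (⊤ : ℕ → A.carrier) = ⊤ := funext fun _ => hf.map_top
  rw [hf.map_eval, comp_top]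

end IsSpHom

namespace SLO

variable {Sig : Type}

theorem eval_mono (A : SLO Sig) (φ : SP Sig) : Monotone fun v => A.eval v φ := by
  intro v w hvw
  induction φ with
  | var n => exact hvw n
  | top => exact le_rfl
  | and φ ψ ihφ ihψ => exact inf_le_inf ihφ ihψ
  | dia r φ ih => exact A.mono r ih

theorem eval_eq_of_varFree (A : SLO Sig) {φ : SP Sig} (hφ : φ.VarFree) (v w : ℕ → A.carrier) :
    A.eval v φ = A.eval w φ := by
  induction φ with
  | var n => exact hφ.elim
  | top => rfl
  | and φ ψ ihφ ihψ => simp only [eval, ihφ hφ.1, ihψ hφ.2]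
  | dia r φ ih => simp only [eval, ih hφ]

theorem valid_iff_eval_top_le_of_varFree (A : SLO Sig) {ι : SPImp Sig} (hι : ι.2.VarFree) :
    A.Valid ι ↔ A.eval ⊤ ι.1 ≤ A.eval ⊤ ι.2 := by
  refine ⟨fun h => h ⊤, fun h v => ?_⟩
  calc A.eval v ι.1 ≤ A.eval ⊤ ι.1 := A.eval_mono ι.1 le_top
    _ ≤ A.eval ⊤ ι.2 := h
    _ = A.eval v ι.2 := A.eval_eq_of_varFree hι ⊤ v

theorem Valid.map_of_varFree {A B : SLO Sig} {f : A.carrier → B.carrier} {ι : SPImp Sig}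
    (hA : A.Valid ι) (hf : IsSpHom A B f) (hι : ι.2.VarFree) : B.Valid ι := by
  rw [valid_iff_eval_top_le_of_varFree B hι, ← hf.map_eval_top, ← hf.map_eval_top]
  exact hf.monotone (hA ⊤)

end SLO

namespace KFrame

variable {Sig : Type}

theorem eval_cmpl (F : KFrame Sig) (v : ℕ → Set F.world) (φ : SP Sig) :
    F.cmpl.eval v φ = {w | F.truth v φ w} := by
  induction φ with
  | var n => rfl
  | top => rfl
  | and φ ψ ihφ ihψ => exact congrArg₂ (fun X Y : Set F.world => X ∩ Y) ihφ ihψ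
  | dia r φ ih =>
    have dia_truth : F.cmpl.dia r {w | F.truth v φ w} = {w | F.truth v (.dia r φ) w} :=
      Set.ext fun _ => exists_congr fun _ => and_comm
    exact (congrArg (F.cmpl.dia r) ih).trans dia_truth

theorem valid_cmpl_iff (F : KFrame Sig) (ι : SPImp Sig) : F.cmpl.Valid ι ↔ F.Valid ι :=
  forall_congr' fun v =>
    Iff.of_eq (congrArg₂ (fun X Y : Set F.world => X ⊆ Y) (F.eval_cmpl v ι.1) (F.eval_cmpl v ι.2))

end KFrame

theorem complex_union_varfree_general {Sig : Type} (Ax Ax0 : Set (SPImp Sig))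
    (hAx : IsComplexLogic Ax) (h0 : ∀ ι ∈ Ax0, ι.2.VarFree) :
    IsComplexLogic (Ax ∪ Ax0) := by
  intro A hA
  obtain ⟨F, hF, η, hη⟩ := hAx A fun ι hι => hA ι (Or.inl hι)
  have hF0 : F.ValidSet Ax0 := fun ι hι =>
    (F.valid_cmpl_iff ι).mp ((hA ι (Or.inr hι)).map_of_varFree hη.isSpHom (h0 ι hι))
  exact ⟨F, fun ι hι => hι.elim (hF ι) (hF0 ι), η, hη⟩

/-- If the spi-logic axiomatised by `Ax` is complex and `Ax0` is a set of
variable-free sp-implications, then the spi-logic axiomatised by `Ax ∪ Ax0` is complex. -/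
theorem complex_union_varfree {Sig : Type} (Ax Ax0 : Set (SPImp Sig))
    (hAx : IsComplexLogic Ax) (h0 : ∀ ι ∈ Ax0, ι.1.VarFree ∧ ι.2.VarFree) :
    IsComplexLogic (Ax ∪ Ax0) :=
  complex_union_varfree_general Ax Ax0 hAx fun ι hι => (h0 ι hι).2
end

section
/- Any spi-logic axiomatised by sp-implications of the form ◇_{R₁}⋯◇_{Rₙ} p → ◇_{S₁}⋯◇_{Sₘ} p (n ≥ 0, m > 0, R₁,…,Rₙ,S₁,…,Sₘ ∈ 𝓡, p a propositional variable) is complex, and hence complete. In particular, the spi-logic axiomatised by {◇p → ◇◇p} (density) and the spi-logic axiomatised by {◇_R◇_S p → ◇_S◇_R p, ◇_S◇_R p → ◇_R◇_S p} (commutativity) are complex and complete. -/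
/-- `diaList [R₁, …, Rₙ] φ = ◇_{R₁} ⋯ ◇_{Rₙ} φ`. -/
def diaList {Sig : Type} : List Sig → SP Sig → SP Sig
  | [], φ => φ
  | r :: L, φ => SP.dia r (diaList L φ)

/-- `◇p → ◇◇p` (density). -/
def e_dense : SPImp Unit := ((SP.var 0).d, ((SP.var 0).d).d)

/-- Commutativity axioms `◇_R◇_S p → ◇_S◇_R p` and `◇_S◇_R p → ◇_R◇_S p` for a
bimodal signature with the two distinct operators indexed by `Bool`. -/
def commAx : Set (SPImp Bool) :=
  {(SP.dia true (SP.dia false (SP.var 0)), SP.dia false (SP.dia true (SP.var 0))),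
   (SP.dia false (SP.dia true (SP.var 0)), SP.dia true (SP.dia false (SP.var 0)))}

/-!
A SLO `A` embeds into the complex algebra of the frame of its filters, where `F` sees `G` along `r`
iff `◇_r a ∈ F` for all `a ∈ G`; the embedding sends `a` to the set of filters containing `a`.
For a nonempty word `R₁ ⋯ Rₙ`, the composite accessibility relation of this frame relates `F` to
`G` iff `◇_{R₁} ⋯ ◇_{Rₙ} a ∈ F` for all `a ∈ G`, the intermediate filters being generated by the
partial images of `G`. On frames, an implication between diamond words is inclusion of composite
relations, so it passes from `A` to the filter frame.
-/

section FilterMap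

open Order

variable {P Q : Type*} [Preorder P] [Preorder Q] {f : P → Q}

/-- The filter generated by the image of a filter under a monotone map; it supplies the
intermediate worlds along a path in the filter frame. -/
def pfilterMap (hf : Monotone f) (F : PFilter P) : PFilter Q :=
  IsPFilter.toPFilter (F := {b | ∃ a ∈ F, f a ≤ b}) <| .of_def
    (F.nonempty.imp' f fun a ha => ⟨a, ha, le_rfl⟩)
    (fun _ ⟨a, ha, hab⟩ _ ⟨a', ha', hab'⟩ =>
      let ⟨c, hc, hca, hca'⟩ := F.directed a ha a' ha'
      ⟨f c, ⟨c, hc, le_rfl⟩, (hf hca).trans hab, (hf hca').trans hab'⟩)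
    fun hbc ⟨a, ha, hab⟩ => ⟨a, ha, hab.trans hbc⟩

theorem mem_pfilterMap {hf : Monotone f} {F : PFilter P} {b : Q} :
    b ∈ pfilterMap hf F ↔ ∃ a ∈ F, f a ≤ b :=
  Iff.rfl

end FilterMap

section Completeness

variable {Sig : Type}

theorem KFrame.cmpl_eval (F : KFrame Sig) (v : ℕ → Set F.world) (φ : SP Sig) :
    F.cmpl.eval v φ = {w | F.truth v φ w} := by
  induction φ with
  | var n => rfl
  | top => rfl
  | and φ ψ ihφ ihψ => exact congrArg₂ (· ⊓ ·) ihφ ihψ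
  | dia r φ ih =>
    refine (congrArg (F.cmpl.dia r) ih).trans (Set.ext fun w => ?_)
    exact exists_congr fun u => and_comm

theorem KFrame.cmpl_valid_iff {F : KFrame Sig} {ι : SPImp Sig} : F.cmpl.Valid ι ↔ F.Valid ι :=
  forall_congr' fun v => by rw [F.cmpl_eval v, F.cmpl_eval v]; rfl

theorem IsSpEmbedding.map_eval {A B : SLO Sig} {η : A.carrier → B.carrier}
    (hη : IsSpEmbedding A B η) (v : ℕ → A.carrier) (φ : SP Sig) :
    η (A.eval v φ) = B.eval (η ∘ v) φ := by
  obtain ⟨-, map_top, map_inf, map_dia⟩ := hη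
  induction φ with
  | var n => rfl
  | top => exact map_top
  | and φ ψ ihφ ihψ => simp only [SLO.eval, map_inf, ihφ, ihψ]
  | dia r φ ih => simp only [SLO.eval, map_dia, ih]

theorem IsSpEmbedding.le_iff_le {A B : SLO Sig} {η : A.carrier → B.carrier}
    (hη : IsSpEmbedding A B η) {a b : A.carrier} : η a ≤ η b ↔ a ≤ b := by
  rw [← inf_eq_left, ← hη.2.2.1, hη.1.eq_iff, inf_eq_left]

theorem IsSpEmbedding.valid {A B : SLO Sig} {η : A.carrier → B.carrier}
    (hη : IsSpEmbedding A B η) {ι : SPImp Sig} (hB : B.Valid ι) : A.Valid ι := fun v => by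
  rw [← hη.le_iff_le, hη.map_eval, hη.map_eval]
  exact hB (η ∘ v)

theorem IsComplexLogic.isCompleteLogic {Ax : Set (SPImp Sig)} (h : IsComplexLogic Ax) :
    IsCompleteLogic Ax := by
  refine fun ι => ⟨fun hKr A hA => ?_, fun hSLO F hF => ?_⟩
  · obtain ⟨F, hF, η, hη⟩ := h A hA
    exact hη.valid (KFrame.cmpl_valid_iff.2 (hKr F hF))
  · exact KFrame.cmpl_valid_iff.1 (hSLO F.cmpl fun κ hκ => KFrame.cmpl_valid_iff.2 (hF κ hκ))

end Completeness

section DiamondWords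

variable {Sig : Type}

theorem SLO.eval_diaList (A : SLO Sig) (v : ℕ → A.carrier) (L : List Sig) (φ : SP Sig) :
    A.eval v (diaList L φ) = L.foldr A.dia (A.eval v φ) := by
  induction L with
  | nil => rfl
  | cons r L ih => exact congrArg (A.dia r) ih

theorem SLO.valid_diaList_iff {A : SLO Sig} {L M : List Sig} {p : ℕ} :
    A.Valid (diaList L (.var p), diaList M (.var p)) ↔
      ∀ a, L.foldr A.dia a ≤ M.foldr A.dia a := by
  simp only [SLO.Valid, SLO.eval_diaList, SLO.eval]
  exact ⟨fun h a => h fun _ => a, fun h v => h (v p)⟩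

/-- The composite of the accessibility relations of a frame along a word `R₁ ⋯ Rₙ`,
followed from left to right: the semantics of the prefix `◇_{R₁} ⋯ ◇_{Rₙ}`. -/
def KFrame.relList (F : KFrame Sig) : List Sig → F.world → F.world → Prop
  | [] => Eq
  | r :: L => Relation.Comp (F.rel r) (F.relList L)

theorem KFrame.truth_diaList {F : KFrame Sig} {v : ℕ → Set F.world} {L : List Sig} {φ : SP Sig}
    {w : F.world} :
    F.truth v (diaList L φ) w ↔ ∃ u, F.relList L w u ∧ F.truth v φ u := by
  induction L generalizing w with
  | nil => exact exists_eq_left'.symm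
  | cons r L ih =>
    simp only [diaList, KFrame.truth, ih, KFrame.relList, Relation.Comp]
    tauto

theorem KFrame.valid_diaList_iff {F : KFrame Sig} {L M : List Sig} {p : ℕ} :
    F.Valid (diaList L (.var p), diaList M (.var p)) ↔ F.relList L ≤ F.relList M := by
  simp only [KFrame.Valid, KFrame.truth_diaList, KFrame.truth]
  constructor
  · intro h w u hwu
    obtain ⟨u', hwu', rfl⟩ := h (fun _ => {u}) w ⟨u, hwu, rfl⟩
    exact hwu'
  · rintro h v w ⟨u, hwu, hu⟩
    exact ⟨u, h w u hwu, hu⟩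

end DiamondWords

namespace SLO

open Order

variable {Sig : Type}

/-- The canonical frame of a SLO, into whose complex algebra the SLO embeds: the worlds are the
filters, and `F` sees `G` along `r` iff `◇_r` maps `G` into `F`. -/
def filterFrame (A : SLO Sig) : KFrame Sig where
  world := PFilter A.carrier
  instNonempty := ⟨⊥⟩
  rel r F G := ∀ a ∈ G, A.dia r a ∈ F

variable {A : SLO Sig}

theorem isSpEmbedding_filterFrame (A : SLO Sig) :
    IsSpEmbedding A A.filterFrame.cmpl fun a => {F : PFilter A.carrier | a ∈ F} := by
  refine ⟨fun a b hab => ?_, ?_, fun a b => ?_, fun r a => ?_⟩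
  · have mem_iff (F : PFilter A.carrier) : a ∈ F ↔ b ∈ F := Set.ext_iff.1 hab F
    exact le_antisymm ((mem_iff (.principal a)).1 le_rfl) ((mem_iff (.principal b)).2 le_rfl)
  · exact Set.eq_univ_of_forall fun _ => PFilter.top_mem
  · exact Set.ext fun _ => PFilter.inf_mem_iff
  · refine Set.ext fun F => ⟨fun hF => ?_, fun ⟨_, ha, hFG⟩ => hFG a ha⟩
    exact ⟨.principal a, le_rfl, fun b hab => PFilter.mem_of_le (A.mono r hab) hF⟩

theorem foldr_dia_mem_of_relList {L : List Sig} {F G : PFilter A.carrier}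
    (h : A.filterFrame.relList L F G) {a : A.carrier} (ha : a ∈ G) : L.foldr A.dia a ∈ F := by
  induction L generalizing F with
  | nil => exact (h : F = G) ▸ ha
  | cons r L ih =>
    obtain ⟨H, hFH, hHG⟩ := h
    exact hFH _ (ih hHG)

theorem relList_filterFrame_iff {L : List Sig} (hL : L ≠ []) {F G : PFilter A.carrier} :
    A.filterFrame.relList L F G ↔ ∀ a ∈ G, L.foldr A.dia a ∈ F := by
  refine ⟨fun h a => foldr_dia_mem_of_relList h, fun h => ?_⟩
  induction L, hL using List.recNeNil generalizing F with
  | singleton r => exact ⟨G, h, rfl⟩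
  | cons r L _ ih =>
    let H := pfilterMap (List.foldr_monotone A.mono L) G
    have hHG : A.filterFrame.relList L H G := ih fun a ha => mem_pfilterMap.2 ⟨a, ha, le_rfl⟩
    have hFH : A.filterFrame.rel r F H := fun b hb => by
      obtain ⟨a, ha, hab⟩ := mem_pfilterMap.1 hb
      exact PFilter.mem_of_le (A.mono r hab) (h a ha)
    exact ⟨H, hFH, hHG⟩

theorem Valid.filterFrame_diaList {L M : List Sig} (hM : M ≠ []) {p : ℕ}
    (h : A.Valid (diaList L (.var p), diaList M (.var p))) :
    A.filterFrame.Valid (diaList L (.var p), diaList M (.var p)) := by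
  rw [KFrame.valid_diaList_iff]
  refine fun F G hFG => (relList_filterFrame_iff hM).2 fun a ha => ?_
  exact PFilter.mem_of_le (valid_diaList_iff.1 h a) (foldr_dia_mem_of_relList hFG ha)

end SLO

theorem isComplexLogic_of_diaList {Sig : Type} {Ax : Set (SPImp Sig)}
    (hAx : ∀ ι ∈ Ax, ∃ (L M : List Sig) (p : ℕ), M ≠ [] ∧
      ι = (diaList L (.var p), diaList M (.var p))) :
    IsComplexLogic Ax := by
  refine fun A hA => ⟨A.filterFrame, fun ι hι => ?_, _, A.isSpEmbedding_filterFrame⟩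
  obtain ⟨L, M, p, hM, rfl⟩ := hAx ι hι
  exact (hA _ hι).filterFrame_diaList hM

/-- Any spi-logic axiomatised by sp-implications of the form
`◇_{R₁}⋯◇_{Rₙ} p → ◇_{S₁}⋯◇_{Sₘ} p` (n ≥ 0, m > 0) is complex, and hence complete.
In particular the spi-logic of density `{◇p → ◇◇p}` and the spi-logic of
commutativity are complex and complete. -/
theorem stmt4 :
    (∀ (Sig : Type) (Ax : Set (SPImp Sig)),
        (∀ ι ∈ Ax, ∃ (L M : List Sig) (p : ℕ), M ≠ [] ∧
            ι = (diaList L (SP.var p), diaList M (SP.var p))) →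
        IsComplexLogic Ax ∧ IsCompleteLogic Ax) ∧
    (IsComplexLogic ({e_dense} : Set (SPImp Unit)) ∧
      IsCompleteLogic ({e_dense} : Set (SPImp Unit))) ∧
    (IsComplexLogic commAx ∧ IsCompleteLogic commAx) := by
  have complex_and_complete (Sig : Type) (Ax : Set (SPImp Sig))
      (hAx : ∀ ι ∈ Ax, ∃ (L M : List Sig) (p : ℕ), M ≠ [] ∧
        ι = (diaList L (SP.var p), diaList M (SP.var p))) :
      IsComplexLogic Ax ∧ IsCompleteLogic Ax :=
    have hComplex := isComplexLogic_of_diaList hAx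
    ⟨hComplex, hComplex.isCompleteLogic⟩
  refine ⟨complex_and_complete, complex_and_complete _ _ ?density,
    complex_and_complete _ _ ?commutativity⟩
  case density =>
    rintro _ rfl
    exact ⟨[()], [(), ()], 0, List.cons_ne_nil _ _, rfl⟩
  case commutativity =>
    rintro _ (rfl | rfl)
    · exact ⟨[true, false], [false, true], 0, List.cons_ne_nil _ _, rfl⟩
    · exact ⟨[false, true], [true, false], 0, List.cons_ne_nil _ _, rfl⟩
end

section
/- The unimodal spi-logic axiomatised by {e_sym}, where e_sym = (q ∧ ◇p → ◇(p ∧ ◇q)), is complex (and hence complete): every SLO validating e_sym admits an sp-embedding into F* for some frame F with a symmetric relation (equivalently, some frame validating e_sym). -/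
/- Represent an element by the set of filters containing it. On filters, let `F` see `G` when
`◇a ∈ F` for all `a ∈ G` and, symmetrically, `◇a ∈ G` for all `a ∈ F`. The one nontrivial point is
that `◇p ∈ F` yields a filter `G ∋ p` seen by `F`: take the filter generated by the elements
`p ⊓ ◇a` with `a ∈ F`. It contains every such `◇a` by construction, and `F` contains every
`◇(p ⊓ ◇a)` because it contains `a ⊓ ◇p`, which is below it by the symmetry axiom. -/

section Filters

open Order

variable {α : Type*} [SemilatticeInf α] {f : α → α}

/-- The canonical accessibility relation on the filters of a semilattice with an operator `f`:
`F` sees `G` if `f` maps `G` into `F`. -/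
def CanonicalRel (f : α → α) (F G : PFilter α) : Prop :=
  ∀ a ∈ G, f a ∈ F

theorem isPFilter_setOf_exists_inf_le (hf : Monotone f) (F : PFilter α) (p : α) :
    IsPFilter {x | ∃ a ∈ F, p ⊓ f a ≤ x} := by
  refine .of_def ?nonempty ?directed fun hxy ⟨a, ha, hx⟩ ↦ ⟨a, ha, hx.trans hxy⟩
  case nonempty =>
    obtain ⟨a, ha⟩ := F.nonempty
    exact ⟨p ⊓ f a, a, ha, le_rfl⟩
  case directed =>
    rintro x ⟨a, ha, hx⟩ y ⟨b, hb, hy⟩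
    exact ⟨p ⊓ f (a ⊓ b), ⟨a ⊓ b, PFilter.inf_mem ha hb, le_rfl⟩,
      (inf_le_inf_left p (hf inf_le_left)).trans hx,
      (inf_le_inf_left p (hf inf_le_right)).trans hy⟩

/-- The filter generated by the elements `p ⊓ f a` with `a ∈ F`, that is, by `p` and the image of
`F` under `f`. It is the least filter `G` containing `p` such that `G` sees `F`. -/
def symmSuccessor (hf : Monotone f) (F : PFilter α) (p : α) : PFilter α :=
  (isPFilter_setOf_exists_inf_le hf F p).toPFilter

theorem mem_symmSuccessor {hf : Monotone f} {F : PFilter α} {p x : α} :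
    x ∈ symmSuccessor hf F p ↔ ∃ a ∈ F, p ⊓ f a ≤ x :=
  Iff.rfl

theorem self_mem_symmSuccessor (hf : Monotone f) (F : PFilter α) (p : α) :
    p ∈ symmSuccessor hf F p :=
  let ⟨a, ha⟩ := F.nonempty
  mem_symmSuccessor.2 ⟨a, ha, inf_le_left⟩

theorem canonicalRel_symmSuccessor_left (hf : Monotone f) (F : PFilter α) (p : α) :
    CanonicalRel f (symmSuccessor hf F p) F :=
  fun a ha ↦ mem_symmSuccessor.2 ⟨a, ha, inf_le_right⟩

theorem canonicalRel_symmSuccessor_right (hf : Monotone f)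
    (hsymm : ∀ p q, q ⊓ f p ≤ f (p ⊓ f q)) {F : PFilter α} {p : α} (hp : f p ∈ F) :
    CanonicalRel f F (symmSuccessor hf F p) := by
  intro x hx
  obtain ⟨a, ha, hax⟩ := mem_symmSuccessor.1 hx
  have hle : a ⊓ f p ≤ f x := (hsymm p a).trans (hf hax)
  exact PFilter.mem_of_le hle (PFilter.inf_mem ha hp)

theorem apply_mem_iff_exists_antisymmRel_canonicalRel (hf : Monotone f)
    (hsymm : ∀ p q, q ⊓ f p ≤ f (p ⊓ f q)) {F : PFilter α} {p : α} :
    f p ∈ F ↔ ∃ G, p ∈ G ∧ AntisymmRel (CanonicalRel f) F G :=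
  ⟨fun hp ↦ ⟨symmSuccessor hf F p, self_mem_symmSuccessor hf F p,
    canonicalRel_symmSuccessor_right hf hsymm hp, canonicalRel_symmSuccessor_left hf F p⟩,
    fun ⟨_, hpG, hFG⟩ ↦ hFG.1 p hpG⟩

end Filters

section Symmetry

variable {Sig : Type}

/-- The implication `q ∧ ◇_r p → ◇_r (p ∧ ◇_r q)`, expressing symmetry of the relation `r`;
`e_sym` is its unimodal instance. -/
def symImp (r : Sig) : SPImp Sig :=
  ((SP.var 1).and ((SP.var 0).dia r), ((SP.var 0).and ((SP.var 1).dia r)).dia r)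

theorem SLO.valid_symImp_iff {A : SLO Sig} {r : Sig} :
    A.Valid (symImp r) ↔ ∀ p q, q ⊓ A.dia r p ≤ A.dia r (p ⊓ A.dia r q) :=
  ⟨fun h p q ↦ h fun n ↦ if n = 0 then p else q, fun h v ↦ h (v 0) (v 1)⟩

theorem KFrame.valid_symImp_iff {K : KFrame Sig} {r : Sig} :
    K.Valid (symImp r) ↔ Std.Symm (K.rel r) := by
  constructor
  · refine fun hK ↦ ⟨fun w u hwu ↦ ?_⟩
    obtain ⟨_, -, rfl, _, hrel, rfl⟩ :=
      hK (fun n ↦ if n = 0 then {u} else {w}) w ⟨rfl, u, hwu, rfl⟩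
    exact hrel
  · rintro hK v w ⟨hq, u, hwu, hp⟩
    exact ⟨u, hwu, hp, w, hK.symm w u hwu, hq⟩

end Symmetry

section Representation

open Order

variable {Sig : Type}

/-- The frame whose worlds are the filters of a SLO, with given accessibility relations. -/
def SLO.filterFrame_s5 (A : SLO Sig) (R : Sig → PFilter A.carrier → PFilter A.carrier → Prop) :
    KFrame Sig where
  world := PFilter A.carrier
  instNonempty := ⟨⊥⟩
  rel := R

theorem setOf_mem_pfilter_injective {α : Type*} [PartialOrder α] :
    Function.Injective fun a : α ↦ {F : PFilter α | a ∈ F} := by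
  intro a b hab
  have hmem (F : PFilter α) : a ∈ F ↔ b ∈ F := Set.ext_iff.1 hab F
  have hle : a ≤ b := (hmem (PFilter.principal a)).1 le_rfl
  have hge : b ≤ a := (hmem (PFilter.principal b)).2 le_rfl
  exact le_antisymm hle hge

theorem SLO.isSpEmbedding_setOf_mem {A : SLO Sig}
    {R : Sig → PFilter A.carrier → PFilter A.carrier → Prop}
    (hR : ∀ r F a, A.dia r a ∈ F ↔ ∃ G, a ∈ G ∧ R r F G) :
    IsSpEmbedding A (A.filterFrame_s5 R).cmpl fun a ↦ {F : PFilter A.carrier | a ∈ F} :=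
  ⟨setOf_mem_pfilter_injective, Set.eq_univ_of_forall fun _ ↦ PFilter.top_mem,
    fun _ _ ↦ Set.ext fun _ ↦ PFilter.inf_mem_iff, fun r a ↦ Set.ext fun F ↦ hR r F a⟩

end Representation

theorem stmt5_general {Sig : Type} (A : SLO Sig) (hA : ∀ r, A.Valid (symImp r)) :
    ∃ K : KFrame Sig, (∀ r, Std.Symm (K.rel r)) ∧ (∀ r, K.Valid (symImp r)) ∧
      ∃ η : A.carrier → K.cmpl.carrier, IsSpEmbedding A K.cmpl η := by
  let K := A.filterFrame_s5 fun r ↦ AntisymmRel (CanonicalRel (A.dia r))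
  have hsymm (r : Sig) : Std.Symm (K.rel r) :=
    inferInstanceAs (Std.Symm (AntisymmRel (CanonicalRel (A.dia r))))
  refine ⟨K, hsymm, fun r ↦ KFrame.valid_symImp_iff.2 (hsymm r), _,
    SLO.isSpEmbedding_setOf_mem fun r _ _ ↦ ?_⟩
  exact apply_mem_iff_exists_antisymmRel_canonicalRel (A.mono r) (SLO.valid_symImp_iff.1 (hA r))

/-- The unimodal spi-logic axiomatised by `{e_sym}` is complex:
every SLO validating `e_sym` sp-embeds into `F*` for some frame with a symmetric
relation (equivalently, some frame validating `e_sym`). -/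
theorem stmt5 (A : SLO Unit) (hA : A.Valid e_sym) :
    ∃ F : KFrame Unit, Symmetric (F.rel ()) ∧ F.Valid e_sym ∧
      ∃ η : A.carrier → (KFrame.cmpl F).carrier, IsSpEmbedding A (KFrame.cmpl F) η := by
  obtain ⟨K, hsymm, hvalid, hη⟩ := stmt5_general A fun _ ↦ hA
  exact ⟨K, fun _ _ ↦ (hsymm ()).symm _ _, hvalid (), hη⟩
end

section
/- The unimodal spi-logic SPi_equiv axiomatised by Ec_equiv = {e_refl, e_trans, e_sym} is complex (and hence complete): every SLO validating Ec_equiv admits an sp-embedding into F* for some frame whose relation is an equivalence relation. Moreover, Ec_equiv and Ec_equiv' = {e_refl, e_trans, e_eucl} have exactly the same SLO-consequences, where e_eucl = (◇p ∧ ◇q → ◇(p ∧ ◇q)). -/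
/-- `◇p ∧ ◇q → ◇(p ∧ ◇q)` (Euclideanness). -/
def e_eucl : SPImp Unit :=
  (((SP.var 0).d).and ((SP.var 1).d), ((SP.var 0).and ((SP.var 1).d)).d)

def Ec_equiv : Set (SPImp Unit) := {e_refl, e_trans, e_sym}

def Ec_equiv' : Set (SPImp Unit) := {e_refl, e_trans, e_eucl}

/-!
On a SLO validating `e_refl` and `e_trans` the diamond is a closure operator `c`. If `c` also
satisfies `q ⊓ c p ≤ c (p ⊓ c q)`, then `w ≤ c a` implies `c w = c (a ⊓ c w)`; hence `w ≤ c a`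
holds exactly when `c w = c u` for some `u ≤ a`. This says that `a ↦ Set.Iic a` preserves the
diamond, when two elements of the SLO are related iff they have the same closure. Replacing `q` by
`c q`, respectively using `q ≤ c q`, turns the symmetry law into the Euclidean law and back.
-/

section ClosureOperator

variable {α : Type*} [SemilatticeInf α] {c : ClosureOperator α}

/-- A closure operator is symmetric if it satisfies the law expressed by `e_sym`. -/
def IsSymmetricClosure (c : ClosureOperator α) : Prop :=
  ∀ p q : α, q ⊓ c p ≤ c (p ⊓ c q)

/-- A closure operator is Euclidean if it satisfies the law expressed by `e_eucl`. -/
def IsEuclideanClosure (c : ClosureOperator α) : Prop :=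
  ∀ p q : α, c p ⊓ c q ≤ c (p ⊓ c q)

theorem isSymmetricClosure_iff_isEuclideanClosure :
    IsSymmetricClosure c ↔ IsEuclideanClosure c := by
  refine ⟨fun h p q => ?_, fun h p q => ?_⟩
  · calc c p ⊓ c q = c q ⊓ c p := inf_comm _ _
      _ ≤ c (p ⊓ c (c q)) := h p (c q)
      _ = c (p ⊓ c q) := by rw [c.idempotent q]
  · calc q ⊓ c p ≤ c q ⊓ c p := inf_le_inf_right _ (c.le_closure q)
      _ = c p ⊓ c q := inf_comm _ _
      _ ≤ c (p ⊓ c q) := h p q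

theorem IsSymmetricClosure.closure_inf_closure_eq (h : IsSymmetricClosure c) {w a : α}
    (hwa : w ≤ c a) : c (a ⊓ c w) = c w := by
  apply le_antisymm
  · exact c.le_closure_iff.mp inf_le_right
  · refine c.le_closure_iff.mp ?_
    calc w = w ⊓ c a := (inf_eq_left.mpr hwa).symm
      _ ≤ c (a ⊓ c w) := h a w

theorem IsSymmetricClosure.le_closure_iff_exists (h : IsSymmetricClosure c) {w a : α} :
    w ≤ c a ↔ ∃ u ≤ a, c w = c u := by
  constructor
  · exact fun hwa => ⟨a ⊓ c w, inf_le_left, (h.closure_inf_closure_eq hwa).symm⟩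
  · rintro ⟨u, hua, hwu⟩
    calc w ≤ c w := c.le_closure w
      _ = c u := hwu
      _ ≤ c a := c.monotone hua

end ClosureOperator

namespace SLO

theorem valid_e_refl_iff {A : SLO Unit} :
    A.Valid e_refl ↔ ∀ a : A.carrier, a ≤ A.dia () a :=
  ⟨fun h a => h fun _ => a, fun h v => h (v 0)⟩

theorem valid_e_trans_iff {A : SLO Unit} :
    A.Valid e_trans ↔ ∀ a : A.carrier, A.dia () (A.dia () a) ≤ A.dia () a :=
  ⟨fun h a => h fun _ => a, fun h v => h (v 0)⟩

theorem valid_e_sym_iff {A : SLO Unit} :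
    A.Valid e_sym ↔ ∀ p q : A.carrier, q ⊓ A.dia () p ≤ A.dia () (p ⊓ A.dia () q) :=
  ⟨fun h p q => h fun n => if n = 0 then p else q, fun h v => h (v 0) (v 1)⟩

theorem valid_e_eucl_iff {A : SLO Unit} :
    A.Valid e_eucl ↔ ∀ p q : A.carrier, A.dia () p ⊓ A.dia () q ≤ A.dia () (p ⊓ A.dia () q) :=
  ⟨fun h p q => h fun n => if n = 0 then p else q, fun h v => h (v 0) (v 1)⟩

theorem valid_e_refl_and_e_trans_iff {A : SLO Unit} :
    A.Valid e_refl ∧ A.Valid e_trans ↔ ∃ c : ClosureOperator A.carrier, ⇑c = A.dia () := by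
  rw [valid_e_refl_iff, valid_e_trans_iff]
  constructor
  · rintro ⟨h_refl, h_trans⟩
    exact ⟨.mk' (A.dia ()) (A.mono ()) h_refl h_trans, rfl⟩
  · rintro ⟨c, hc⟩
    rw [← hc]
    exact ⟨c.le_closure, fun a => (c.idempotent a).le⟩

theorem validSet_Ec_equiv_iff {A : SLO Unit} :
    A.ValidSet Ec_equiv ↔
      ∃ c : ClosureOperator A.carrier, ⇑c = A.dia () ∧ IsSymmetricClosure c := by
  calc A.ValidSet Ec_equiv
      ↔ (A.Valid e_refl ∧ A.Valid e_trans) ∧ A.Valid e_sym := by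
        simp [ValidSet, Ec_equiv, and_assoc]
    _ ↔ _ := by
        rw [valid_e_refl_and_e_trans_iff, valid_e_sym_iff, ← exists_and_right]
        refine exists_congr fun c => and_congr_right fun hc => ?_
        rw [IsSymmetricClosure, hc]

theorem validSet_Ec_equiv'_iff {A : SLO Unit} :
    A.ValidSet Ec_equiv' ↔
      ∃ c : ClosureOperator A.carrier, ⇑c = A.dia () ∧ IsEuclideanClosure c := by
  calc A.ValidSet Ec_equiv'
      ↔ (A.Valid e_refl ∧ A.Valid e_trans) ∧ A.Valid e_eucl := by
        simp [ValidSet, Ec_equiv', and_assoc]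
    _ ↔ _ := by
        rw [valid_e_refl_and_e_trans_iff, valid_e_eucl_iff, ← exists_and_right]
        refine exists_congr fun c => and_congr_right fun hc => ?_
        rw [IsEuclideanClosure, hc]

theorem validSet_Ec_equiv_iff_validSet_Ec_equiv' {A : SLO Unit} :
    A.ValidSet Ec_equiv ↔ A.ValidSet Ec_equiv' := by
  simp only [validSet_Ec_equiv_iff, validSet_Ec_equiv'_iff,
    isSymmetricClosure_iff_isEuclideanClosure]

variable {Sig : Type}

/-- The frame whose worlds are the elements of a SLO and whose accessibility relations are `R`. It
serves to represent the SLO by principal lower sets. -/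
def frameOn (A : SLO Sig) (R : Sig → A.carrier → A.carrier → Prop) : KFrame Sig where
  world := A.carrier
  instNonempty := ⟨⊤⟩
  rel := R

theorem isSpEmbedding_Iic_iff {A : SLO Sig} {R : Sig → A.carrier → A.carrier → Prop} :
    IsSpEmbedding A (A.frameOn R).cmpl Set.Iic ↔
      ∀ r a w, w ≤ A.dia r a ↔ ∃ u ≤ a, R r w u := by
  constructor
  · rintro ⟨-, -, -, h_dia⟩ r a w
    exact Set.ext_iff.mp (h_dia r a) w
  · intro h_dia
    exact ⟨Set.Iic_injective, Set.Iic_top, fun _ _ => Set.Iic_inter_Iic.symm,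
      fun r a => Set.ext (h_dia r a)⟩

theorem isSpEmbedding_Iic_ker {A : SLO Sig}
    (hA : ∀ r, ∃ c : ClosureOperator A.carrier, ⇑c = A.dia r ∧ IsSymmetricClosure c) :
    IsSpEmbedding A (A.frameOn fun r => Setoid.ker (A.dia r)).cmpl Set.Iic := by
  refine isSpEmbedding_Iic_iff.mpr fun r a w => ?_
  obtain ⟨c, hc, h_sym⟩ := hA r
  rw [← hc]
  exact h_sym.le_closure_iff_exists

end SLO

/-- `SPi_equiv` (axiomatised by `Ec_equiv`) is complex: every SLO
validating `Ec_equiv` sp-embeds into `F*` for some frame whose relation is an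
equivalence relation. Moreover, `Ec_equiv` and `Ec_equiv'` have exactly the same
SLO-consequences. -/
theorem stmt6 :
    (∀ A : SLO Unit, A.ValidSet Ec_equiv →
      ∃ F : KFrame Unit, Equivalence (F.rel ()) ∧
        ∃ η : A.carrier → (KFrame.cmpl F).carrier, IsSpEmbedding A (KFrame.cmpl F) η) ∧
    (∀ ι : SPImp Unit, SLOCons Ec_equiv ι ↔ SLOCons Ec_equiv' ι) := by
  constructor
  · intro A hA
    exact ⟨A.frameOn fun r => Setoid.ker (A.dia r), (Setoid.ker (A.dia ())).iseqv, Set.Iic,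
      SLO.isSpEmbedding_Iic_ker fun _ => SLO.validSet_Ec_equiv_iff.mp hA⟩
  · intro ι
    exact forall_congr' fun _ =>
      imp_congr_left SLO.validSet_Ec_equiv_iff_validSet_Ec_equiv'
end

section
/- The unimodal spi-logic axiomatised by {p → ◇p, ◇p → p} is complex (and hence complete): every SLO validating both p → ◇p and ◇p → p admits an sp-embedding into F* for some frame validating both, equivalently, some frame whose relation is the equality relation on its set of points. -/
/-- `◇p → p`. -/
def e_dp : SPImp Unit := ((SP.var 0).d, SP.var 0)

/-!
The two axioms force `◇` to be the identity on `A`. Dually, when the accessibility relation of a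
frame is equality, `◇` is the identity on its complex algebra. So it is enough to embed the
underlying semilattice, and `a ↦ {x | x ≤ a}` embeds it into the powerset of `A`.
-/

section

variable {Sig : Type}

/-- The sp-implication `p → ◇_r p`, the multimodal form of `e_refl`. -/
def diaIntro (r : Sig) : SPImp Sig := (.var 0, .dia r (.var 0))

/-- The sp-implication `◇_r p → p`, the multimodal form of `e_dp`. -/
def diaElim (r : Sig) : SPImp Sig := (.dia r (.var 0), .var 0)

namespace SLO

variable {A : SLO Sig} {r : Sig}

theorem valid_diaIntro_iff : A.Valid (diaIntro r) ↔ ∀ a, a ≤ A.dia r a :=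
  ⟨fun h a => h fun _ => a, fun h v => h (v 0)⟩

theorem valid_diaElim_iff : A.Valid (diaElim r) ↔ ∀ a, A.dia r a ≤ a :=
  ⟨fun h a => h fun _ => a, fun h v => h (v 0)⟩

theorem dia_eq_self_of_valid (hI : A.Valid (diaIntro r)) (hE : A.Valid (diaElim r))
    (a : A.carrier) : A.dia r a = a :=
  le_antisymm (valid_diaElim_iff.1 hE a) (valid_diaIntro_iff.1 hI a)

end SLO

namespace KFrame

variable {F : KFrame Sig} {r : Sig}

theorem valid_diaIntro_iff : F.Valid (diaIntro r) ↔ ∀ w, F.rel r w w := by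
  refine ⟨fun h w => ?_, fun h v w hw => ⟨w, h w, hw⟩⟩
  obtain ⟨u, hwu, rfl⟩ := h (fun _ => {w}) w rfl
  exact hwu

theorem valid_diaElim_iff : F.Valid (diaElim r) ↔ ∀ w u, F.rel r w u → w = u := by
  refine ⟨fun h w u hwu => h (fun _ => {u}) w ⟨u, hwu, rfl⟩, ?_⟩
  rintro h v w ⟨u, hwu, hu⟩
  obtain rfl := h w u hwu
  exact hu

/-- The frame on the set of points `W` in which every accessibility relation is equality. -/
def equality (Sig W : Type) [Nonempty W] : KFrame Sig where
  world := W
  rel _ x y := x = y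

end KFrame

theorem isSpEmbedding_Iic (A : SLO Sig) (R : Sig → A.carrier → A.carrier → Prop)
    (hR : ∀ r x a, x ≤ A.dia r a ↔ ∃ u ≤ a, R r x u) :
    IsSpEmbedding A (KFrame.cmpl { world := A.carrier, rel := R }) Set.Iic :=
  ⟨Set.Iic_injective, Set.Iic_top, fun _ _ => Set.Iic_inter_Iic.symm,
    fun r a => Set.ext fun x => hR r x a⟩

theorem isSpEmbedding_Iic_equality (A : SLO Sig) (hA : ∀ r a, A.dia r a = a) :
    IsSpEmbedding A (KFrame.cmpl (KFrame.equality Sig A.carrier)) Set.Iic :=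
  isSpEmbedding_Iic A (fun _ x y => x = y) fun r x a => by
    simp only [hA, exists_eq_right']

theorem stmt7_general (A : SLO Sig) (hI : ∀ r, A.Valid (diaIntro r))
    (hE : ∀ r, A.Valid (diaElim r)) :
    ∃ F : KFrame Sig, (∀ r (x y : F.world), F.rel r x y ↔ x = y) ∧
      (∀ r, F.Valid (diaIntro r)) ∧ (∀ r, F.Valid (diaElim r)) ∧
      ∃ η : A.carrier → (KFrame.cmpl F).carrier, IsSpEmbedding A (KFrame.cmpl F) η :=
  ⟨KFrame.equality Sig A.carrier, fun _ _ _ => Iff.rfl,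
    fun _ => KFrame.valid_diaIntro_iff.2 fun _ => rfl,
    fun _ => KFrame.valid_diaElim_iff.2 fun _ _ => id,
    Set.Iic, isSpEmbedding_Iic_equality A fun r => SLO.dia_eq_self_of_valid (hI r) (hE r)⟩

end

/-- The unimodal spi-logic axiomatised by `{p → ◇p, ◇p → p}` is complex:
every SLO validating both sp-embeds into `F*` for some frame validating both,
equivalently, some frame whose relation is the equality relation on its points. -/
theorem stmt7 (A : SLO Unit) (h1 : A.Valid e_refl) (h2 : A.Valid e_dp) :
    ∃ F : KFrame Unit, (∀ x y : F.world, F.rel () x y ↔ x = y) ∧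
      F.Valid e_refl ∧ F.Valid e_dp ∧
      ∃ η : A.carrier → (KFrame.cmpl F).carrier, IsSpEmbedding A (KFrame.cmpl F) η := by
  obtain ⟨F, hF, hI, hE, hη⟩ := stmt7_general A (fun _ => h1) (fun _ => h2)
  exact ⟨F, hF (), hI (), hE (), hη⟩
end

section
/- For every n ≥ 2, the unimodal spi-logic SPiⁿ_equiv axiomatised by Ec_equiv ∪ {e_funⁿ} is complete: for every sp-implication ι, Ec_equiv ∪ {e_funⁿ} ⊨_Kr ι if and only if Ec_equiv ∪ {e_funⁿ} ⊨_SLO ι. (The frames validating Ec_equiv ∪ {e_funⁿ} are exactly the frames whose relation is an equivalence relation all of whose classes have at most n elements.) -/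
/-- Conjunction of a list of variables (with a final `⊤`). -/
def conjVarsList : List ℕ → SP Unit
  | [] => SP.top
  | n :: L => (SP.var n).and (conjVarsList L)

/-- The conjunction `⋀ Q` of a finite set of variables. -/
def conjVars (Q : Finset ℕ) : SP Unit := conjVarsList (Q.sort (· ≤ ·))

/-- Conjunction of a list of sp-formulas (with a final `⊤`). -/
def conjSP : List (SP Unit) → SP Unit
  | [] => SP.top
  | φ :: L => φ.and (conjSP L)

/-- `e_funⁿ`: the sp-implication
`⋀_{Q ⊆ {p₀,…,pₙ}, |Q| = n} ◇(⋀ Q) → ◇(p₀ ∧ ⋯ ∧ pₙ)`. -/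
noncomputable def eFun (n : ℕ) : SPImp Unit :=
  (conjSP ((((Finset.range (n + 1)).powersetCard n).toList).map fun Q => (conjVars Q).d),
   (conjVars (Finset.range (n + 1))).d)

/-! Modulo `Ec_equiv`, every sp-formula is equivalent to a conjunction of variables and of formulas
`◇(⋀ S)` with `S` a finite set of variables. Modulo `e_funⁿ`, a formula `◇(⋀ Q)` moreover follows
from all the `◇(⋀ T)` with `T ⊆ Q` of size at most `n`: a larger `Q` splits into `n + 1` nonempty
blocks, and `e_funⁿ` glues together the `n + 1` formulas `◇(⋀ T)` in which `T` misses one block.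
Hence `σ → τ` is derivable as soon as the variables of `τ` outside diamonds occur outside diamonds
in `σ` and every small `T ⊆ Q`, with `◇(⋀ Q)` in the normal form of `τ`, is contained in a set of
the normal form of `◇σ`. If the second condition fails for `T`, then the full frame whose worlds
are the elements of `T`, with all variables but `t` true at the world `t`, refutes `σ → τ`; if the
first one fails, then a full frame with two worlds does. -/

theorem exists_surjOn_fin_of_lt_encard {α : Type*} {s : Set α} {n : ℕ} (h : n < s.encard) :
    ∃ c : α → Fin (n + 1), Set.SurjOn c s Set.univ := by
  have hcard : (Set.univ : Set (Fin (n + 1))).encard ≤ s.encard := by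
    simpa using Order.add_one_le_of_lt h
  have : Nonempty α := (Set.encard_pos.1 (bot_le.trans_lt h)).to_type
  obtain ⟨f, hfs, hf⟩ := Set.finite_univ.exists_injOn_of_encard_le hcard
  have hinv := Function.leftInverse_invFun (Set.injOn_univ.1 hf)
  exact ⟨Function.invFun f, fun i hi => ⟨f i, hfs hi, hinv i⟩⟩

theorem mem_powersetCard_iff_exists_erase {α : Type*} [DecidableEq α] {s t : Finset α} {n : ℕ}
    (hs : s.card = n + 1) : t ∈ s.powersetCard n ↔ ∃ a ∈ s, s.erase a = t := by
  rw [← Finset.covBy_iff_exists_erase, Finset.covBy_iff_card_sdiff_eq_one,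
    Finset.mem_powersetCard]
  refine and_congr_right fun hts => ?_
  have := Finset.card_sdiff_add_card_eq_card hts
  lia

/-- The axioms `Ec_equiv` of reflexivity, transitivity and symmetry. -/
def ecEquiv : Set (SPImp Unit) := {e_refl, e_trans, e_sym}

theorem ecEquiv_union_eFun (n : ℕ) : ecEquiv ∪ {eFun n} = {e_refl, e_trans, e_sym, eFun n} := by
  simp only [ecEquiv, Set.insert_union, Set.singleton_union]

namespace SP

/-- The variables occurring in `φ` outside all diamonds. Together with `diaVars` it describes the
normal form of `φ` modulo `Ec_equiv`. -/
def rootVars {Sig : Type} : SP Sig → Finset ℕ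
  | var x => {x}
  | top => ∅
  | and φ ψ => rootVars φ ∪ rootVars ψ
  | dia _ _ => ∅

/-- For each occurrence of a diamond in `φ`, the set of the variables in its scope that are not in
the scope of a further diamond. -/
def diaVars : SP Unit → Finset (Finset ℕ)
  | var _ => ∅
  | top => ∅
  | and φ ψ => diaVars φ ∪ diaVars ψ
  | dia _ φ => insert (rootVars φ) (diaVars φ)

end SP

namespace SLO

section Conjunctions

variable (A : SLO Unit) (v : ℕ → A.carrier)

theorem le_eval_conjVarsList {a : A.carrier} {L : List ℕ} :
    a ≤ A.eval v (conjVarsList L) ↔ ∀ x ∈ L, a ≤ v x := by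
  induction L with
  | nil => simp [conjVarsList, eval]
  | cons x L ih => simp [conjVarsList, eval, ih]

theorem eval_conjVars (Q : Finset ℕ) : A.eval v (conjVars Q) = Q.inf v :=
  eq_of_forall_le_iff fun a => by simp [conjVars, le_eval_conjVarsList]

theorem le_eval_conjSP {a : A.carrier} {L : List (SP Unit)} :
    a ≤ A.eval v (conjSP L) ↔ ∀ φ ∈ L, a ≤ A.eval v φ := by
  induction L with
  | nil => simp [conjSP, eval]
  | cons φ L ih => simp [conjSP, eval, ih]

theorem le_eval_eFun_fst {a : A.carrier} {n : ℕ} :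
    a ≤ A.eval v (eFun n).1 ↔
      ∀ i ∈ Finset.range (n + 1), a ≤ A.dia () (((Finset.range (n + 1)).erase i).inf v) := by
  simp [eFun, le_eval_conjSP, mem_powersetCard_iff_exists_erase (Finset.card_range (n + 1)),
    SP.d, eval, eval_conjVars, -Finset.mem_powersetCard]

theorem le_eval_eFun_snd {a : A.carrier} {n : ℕ} :
    a ≤ A.eval v (eFun n).2 ↔ a ≤ A.dia () ((Finset.range (n + 1)).inf v) := by
  simp only [eFun, SP.d, eval, eval_conjVars]

end Conjunctions

theorem validSet_union_singleton {Sig : Type} {A : SLO Sig} {Ax : Set (SPImp Sig)}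
    {ι : SPImp Sig} : A.ValidSet (Ax ∪ {ι}) ↔ A.ValidSet Ax ∧ A.Valid ι := by
  simp only [ValidSet, Set.mem_union, Set.mem_singleton_iff, or_imp, forall_and, forall_eq]

section EcEquiv

variable {A : SLO Unit} (hA : A.ValidSet ecEquiv)

include hA

theorem le_dia (a : A.carrier) : a ≤ A.dia () a :=
  hA e_refl (by simp [ecEquiv]) fun _ => a

theorem dia_dia_le (a : A.carrier) : A.dia () (A.dia () a) ≤ A.dia () a :=
  hA e_trans (by simp [ecEquiv]) fun _ => a

theorem inf_dia_le (a b : A.carrier) : b ⊓ A.dia () a ≤ A.dia () (a ⊓ A.dia () b) :=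
  hA e_sym (by simp [ecEquiv]) fun i => if i = 0 then a else b

theorem dia_inf_eq_of_dia_le {a b : A.carrier} (hb : A.dia () b ≤ b) :
    A.dia () (a ⊓ b) = A.dia () a ⊓ b := by
  apply le_antisymm
  · exact le_inf (A.mono () inf_le_left) ((A.mono () inf_le_right).trans hb)
  · calc A.dia () a ⊓ b = b ⊓ A.dia () a := inf_comm _ _
      _ ≤ A.dia () (a ⊓ A.dia () b) := inf_dia_le hA a b
      _ ≤ A.dia () (a ⊓ b) := A.mono () (inf_le_inf_left a hb)

theorem dia_finsetInf_dia_le {κ : Type*} (s : Finset κ) (f : κ → A.carrier) :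
    A.dia () (s.inf fun i => A.dia () (f i)) ≤ s.inf fun i => A.dia () (f i) :=
  Finset.le_inf fun i hi => (A.mono () (Finset.inf_le hi)).trans (dia_dia_le hA (f i))

theorem eval_eq_rootVars_inf_diaVars (v : ℕ → A.carrier) (φ : SP Unit) :
    A.eval v φ = φ.rootVars.inf v ⊓ φ.diaVars.inf fun S => A.dia () (S.inf v) := by
  induction φ with
  | var x => simp [eval, SP.rootVars, SP.diaVars]
  | top => simp [eval, SP.rootVars, SP.diaVars]
  | and φ ψ ihφ ihψ =>
    simp only [eval, SP.rootVars, SP.diaVars, ihφ, ihψ, Finset.inf_union]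
    exact inf_inf_inf_comm _ _ _ _
  | dia r φ ih =>
    simp only [eval, SP.rootVars, SP.diaVars, ih, Finset.inf_insert, Finset.inf_empty, top_inf_eq]
    exact dia_inf_eq_of_dia_le hA (dia_finsetInf_dia_le hA _ _)

theorem le_eval_iff_rootVars_diaVars {v : ℕ → A.carrier} {φ : SP Unit} {a : A.carrier} :
    a ≤ A.eval v φ ↔
      (∀ x ∈ φ.rootVars, a ≤ v x) ∧ ∀ S ∈ φ.diaVars, a ≤ A.dia () (S.inf v) := by
  rw [eval_eq_rootVars_inf_diaVars hA, le_inf_iff, Finset.le_inf_iff, Finset.le_inf_iff]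

theorem eval_le_dia_of_mem_diaVars {v : ℕ → A.carrier} {φ : SP Unit} {S : Finset ℕ}
    (hS : S ∈ φ.d.diaVars) : A.eval v φ ≤ A.dia () (S.inf v) :=
  ((le_eval_iff_rootVars_diaVars hA (φ := φ.d)).1 (le_dia hA _)).2 S hS

end EcEquiv

section Fun

variable {A : SLO Unit} {n : ℕ} (hfun : A.Valid (eFun n))

include hfun

theorem le_dia_inf_of_filter_ne {κ : Type*} {v : κ → A.carrier} {a : A.carrier} {S : Finset κ}
    (c : κ → Fin (n + 1)) (h : ∀ i, a ≤ A.dia () ((S.filter (c · ≠ i)).inf v)) :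
    a ≤ A.dia () (S.inf v) := by
  let block (i : ℕ) : A.carrier := (S.filter fun x => (c x : ℕ) = i).inf v
  have hprem : a ≤ A.eval block (eFun n).1 := by
    refine (le_eval_eFun_fst A block).2 fun i hi => ?_
    refine (h ⟨i, Finset.mem_range.1 hi⟩).trans (A.mono () ?_)
    refine Finset.le_inf fun j hj => Finset.inf_mono fun x hx => ?_
    grind
  calc a ≤ A.dia () ((Finset.range (n + 1)).inf block) :=
        (le_eval_eFun_snd A block).1 (hprem.trans (hfun block))
    _ ≤ A.dia () (S.inf v) := A.mono () <| Finset.le_inf fun x hx =>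
        (Finset.inf_le (Finset.mem_range.2 (c x).2)).trans
          (Finset.inf_le (by simp [hx]))

theorem le_dia_inf_of_card_le {κ : Type*} {v : κ → A.carrier} {a : A.carrier} {Q : Finset κ}
    (h : ∀ T ⊆ Q, T.card ≤ n → a ≤ A.dia () (T.inf v)) : a ≤ A.dia () (Q.inf v) := by
  induction Q using Finset.strongInduction with
  | H Q ih =>
    rcases le_or_gt Q.card n with hQ | hQ
    · exact h Q subset_rfl hQ
    obtain ⟨c, hc⟩ := exists_surjOn_fin_of_lt_encard (s := (Q : Set κ)) (n := n) (by simpa using hQ)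
    refine le_dia_inf_of_filter_ne hfun c fun i => ?_
    obtain ⟨x, hx, hxi⟩ := hc (Set.mem_univ i)
    have hlt : Q.filter (c · ≠ i) ⊂ Q := Finset.filter_ssubset.2 ⟨x, hx, not_not.2 hxi⟩
    exact ih _ hlt fun T hT => h T (hT.trans hlt.subset)

theorem eval_le_eval_of_subset (hA : A.ValidSet ecEquiv) {σ τ : SP Unit}
    (hroot : τ.rootVars ⊆ σ.rootVars)
    (hdia : ∀ Q ∈ τ.diaVars, ∀ T ⊆ Q, T.card ≤ n → ∃ S ∈ σ.d.diaVars, T ⊆ S)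
    (v : ℕ → A.carrier) : A.eval v σ ≤ A.eval v τ := by
  refine (le_eval_iff_rootVars_diaVars hA).2 ⟨fun x hx => ?_, fun Q hQ => ?_⟩
  · exact ((le_eval_iff_rootVars_diaVars hA).1 le_rfl).1 x (hroot hx)
  · refine le_dia_inf_of_card_le hfun fun T hTQ hT => ?_
    obtain ⟨S, hS, hTS⟩ := hdia Q hQ T hTQ hT
    exact (eval_le_dia_of_mem_diaVars hA hS).trans (A.mono () (Finset.inf_mono hTS))

end Fun

end SLO

namespace KFrame

section ComplexAlgebra

variable {Sig : Type} (F : KFrame Sig)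

/-- The singleton `{w}` as an element of the complex algebra; it turns truth at `w` into an
inequality in that algebra. -/
def atom (w : F.world) : F.cmpl.carrier := ({w} : Set F.world)

variable {F}

theorem atom_le {w : F.world} {X : Set F.world} : F.atom w ≤ X ↔ w ∈ X :=
  Set.singleton_subset_iff

theorem atom_le_finsetInf {κ : Type*} {w : F.world} {s : Finset κ} {f : κ → Set F.world} :
    F.atom w ≤ s.inf (α := F.cmpl.carrier) f ↔ ∀ i ∈ s, w ∈ f i :=
  Finset.le_inf_iff.trans (forall₂_congr fun _ _ => atom_le)

theorem atom_le_dia {w : F.world} {r : Sig} {X : F.cmpl.carrier} :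
    F.atom w ≤ F.cmpl.dia r X ↔ ∃ u, F.rel r w u ∧ F.atom u ≤ X :=
  atom_le.trans (exists_congr fun _ => and_comm.trans (and_congr_right' atom_le.symm))

theorem atom_le_dia_finsetInf {κ : Type*} {w : F.world} {r : Sig} {s : Finset κ}
    {f : κ → Set F.world} :
    F.atom w ≤ F.cmpl.dia r (s.inf f) ↔ ∃ u, F.rel r w u ∧ ∀ i ∈ s, u ∈ f i :=
  atom_le_dia.trans (exists_congr fun _ => and_congr_right' atom_le_finsetInf)

theorem atom_le_eval {v : ℕ → Set F.world} {φ : SP Sig} {w : F.world} :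
    F.atom w ≤ F.cmpl.eval v φ ↔ F.truth v φ w := by
  induction φ generalizing w with
  | var x => exact atom_le
  | top => exact iff_of_true le_top trivial
  | and φ ψ ihφ ihψ => exact le_inf_iff.trans (and_congr ihφ ihψ)
  | dia r φ ih => exact atom_le_dia.trans (exists_congr fun _ => and_congr_right' ih)

theorem valid_cmpl {ι : SPImp Sig} : F.cmpl.Valid ι ↔ F.Valid ι :=
  forall_congr' fun _ =>
    ⟨fun h _ hw => atom_le_eval.1 ((atom_le_eval.2 hw).trans h),
      fun h w hw => atom_le.1 (atom_le_eval.2 (h w (atom_le_eval.1 (atom_le.2 hw))))⟩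

theorem validSet_cmpl {Ax : Set (SPImp Sig)} : F.cmpl.ValidSet Ax ↔ F.ValidSet Ax :=
  forall₂_congr fun _ _ => valid_cmpl

theorem validSet_union_singleton {Ax : Set (SPImp Sig)} {ι : SPImp Sig} :
    F.ValidSet (Ax ∪ {ι}) ↔ F.ValidSet Ax ∧ F.Valid ι := by
  simp only [ValidSet, Set.mem_union, Set.mem_singleton_iff, or_imp, forall_and, forall_eq]

end ComplexAlgebra

section Correspondence

variable {F : KFrame Unit}

theorem valid_e_refl_iff : F.Valid e_refl ↔ ∀ w, F.rel () w w := by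
  refine ⟨fun h w => ?_, fun h v w hw => ⟨w, h w, hw⟩⟩
  obtain ⟨u, hwu, rfl⟩ := h (fun _ => {w}) w rfl
  exact hwu

theorem valid_e_trans_iff :
    F.Valid e_trans ↔ ∀ {x y z}, F.rel () x y → F.rel () y z → F.rel () x z := by
  constructor
  · intro h x y z hxy hyz
    obtain ⟨u, hxu, rfl⟩ := h (fun _ => {z}) x ⟨y, hxy, z, hyz, rfl⟩
    exact hxu
  · rintro h v w ⟨u, hwu, z, huz, hz⟩
    exact ⟨z, h hwu huz, hz⟩

theorem valid_e_sym_iff : F.Valid e_sym ↔ ∀ {x y}, F.rel () x y → F.rel () y x := by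
  constructor
  · intro h x y hxy
    obtain ⟨u, -, rfl, z, huz, rfl⟩ := h (fun i => if i = 0 then {y} else {x}) x ⟨rfl, y, hxy, rfl⟩
    exact huz
  · rintro h v w ⟨hw, u, hwu, hu⟩
    exact ⟨u, hwu, hu, w, h hwu, hw⟩

theorem validSet_ecEquiv_iff : F.ValidSet ecEquiv ↔ Equivalence (F.rel ()) := by
  have hsplit : F.ValidSet ecEquiv ↔ F.Valid e_refl ∧ F.Valid e_trans ∧ F.Valid e_sym := by
    simp [ValidSet, ecEquiv]
  rw [hsplit, valid_e_refl_iff, valid_e_trans_iff, valid_e_sym_iff]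
  exact ⟨fun ⟨hr, ht, hs⟩ => ⟨hr, hs, ht⟩, fun h => ⟨h.refl, h.trans, h.symm⟩⟩

theorem truth_eFun_fst {v : ℕ → Set F.world} {w : F.world} {n : ℕ} :
    F.truth v (eFun n).1 w ↔ ∀ i ∈ Finset.range (n + 1), ∃ u, F.rel () w u ∧
      ∀ j ∈ (Finset.range (n + 1)).erase i, u ∈ v j :=
  atom_le_eval.symm.trans <| (SLO.le_eval_eFun_fst F.cmpl v).trans <|
    forall₂_congr fun _ _ => atom_le_dia_finsetInf

theorem truth_eFun_snd {v : ℕ → Set F.world} {w : F.world} {n : ℕ} :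
    F.truth v (eFun n).2 w ↔ ∃ u, F.rel () w u ∧ ∀ j ∈ Finset.range (n + 1), u ∈ v j :=
  atom_le_eval.symm.trans <| (SLO.le_eval_eFun_snd F.cmpl v).trans atom_le_dia_finsetInf

theorem encard_le_of_valid_eFun {n : ℕ} (h : F.Valid (eFun n)) (w : F.world) :
    {u | F.rel () w u}.encard ≤ n := by
  by_contra! hlt
  obtain ⟨c, hc⟩ := exists_surjOn_fin_of_lt_encard hlt
  have hprem : F.truth (fun i => {u | (c u : ℕ) ≠ i}) (eFun n).1 w := by
    refine truth_eFun_fst.2 fun i hi => ?_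
    obtain ⟨u, hwu, hu⟩ := hc (Set.mem_univ ⟨i, Finset.mem_range.1 hi⟩)
    exact ⟨u, hwu, fun j hj => by simpa [hu] using (Finset.ne_of_mem_erase hj).symm⟩
  obtain ⟨u, -, hu⟩ := truth_eFun_snd.1 (h _ w hprem)
  exact hu (c u) (Finset.mem_range.2 (c u).2) rfl

theorem valid_eFun_of_encard_le {n : ℕ} (h : ∀ w, {u | F.rel () w u}.encard ≤ n) :
    F.Valid (eFun n) := by
  intro v w hprem
  choose! u hwu hu using truth_eFun_fst.1 hprem
  have hlt : {u | F.rel () w u}.encard < (Finset.range (n + 1) : Set ℕ).encard := by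
    rw [Set.encard_coe_eq_coe_finsetCard, Finset.card_range]
    exact (h w).trans_lt (by exact_mod_cast n.lt_succ_self)
  obtain ⟨i, hi, k, hk, hik, hu_eq⟩ := Set.exists_ne_map_eq_of_encard_lt_of_maps_to hlt hwu
  refine truth_eFun_snd.2 ⟨u i, hwu i hi, fun j hj => ?_⟩
  rcases eq_or_ne j i with rfl | hji
  · exact hu_eq ▸ hu k hk j (Finset.mem_erase.2 ⟨hik, hj⟩)
  · exact hu i hi j (Finset.mem_erase.2 ⟨hji, hj⟩)

theorem validSet_ecEquiv_union_eFun_iff {n : ℕ} :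
    F.ValidSet (ecEquiv ∪ {eFun n}) ↔
      Equivalence (F.rel ()) ∧ ∀ w, {u | F.rel () w u}.encard ≤ n := by
  rw [validSet_union_singleton, validSet_ecEquiv_iff]
  exact and_congr_right' ⟨encard_le_of_valid_eFun, valid_eFun_of_encard_le⟩

theorem truth_iff_rootVars_diaVars (hF : Equivalence (F.rel ())) {v : ℕ → Set F.world}
    {φ : SP Unit} {w : F.world} :
    F.truth v φ w ↔ (∀ x ∈ φ.rootVars, w ∈ v x) ∧
      ∀ S ∈ φ.diaVars, ∃ u, F.rel () w u ∧ ∀ x ∈ S, u ∈ v x :=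
  have hcmpl : F.cmpl.ValidSet ecEquiv := validSet_cmpl.2 (validSet_ecEquiv_iff.2 hF)
  atom_le_eval.symm.trans <| (SLO.le_eval_iff_rootVars_diaVars hcmpl).trans <|
    and_congr (forall₂_congr fun _ _ => atom_le) (forall₂_congr fun _ _ => atom_le_dia_finsetInf)

end Correspondence

section Full

/-- The frame on `W` whose relation is total; the frames of this kind refute all
non-derivable implications. -/
def full (W : Type) [Nonempty W] : KFrame Unit where
  world := W
  rel _ _ _ := True

theorem equivalence_full (W : Type) [Nonempty W] : Equivalence ((full W).rel ()) :=
  ⟨fun _ => trivial, fun _ => trivial, fun _ _ => trivial⟩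

theorem validSet_full {W : Type} [Nonempty W] {n : ℕ} (hW : ENat.card W ≤ n) :
    (full W).ValidSet (ecEquiv ∪ {eFun n}) :=
  validSet_ecEquiv_union_eFun_iff.2
    ⟨equivalence_full W, fun _ => (Set.encard_le_card (α := W)).trans hW⟩

theorem truth_full_iff {W : Type} [Nonempty W] {v : ℕ → Set W} {φ : SP Unit} {w : W} :
    (full W).truth v φ w ↔
      (∀ x ∈ φ.rootVars, w ∈ v x) ∧ ∀ S ∈ φ.diaVars, ∃ u, ∀ x ∈ S, u ∈ v x :=
  (truth_iff_rootVars_diaVars (equivalence_full W)).trans <| and_congr_right' <|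
    forall₂_congr fun _ _ => exists_congr fun _ => iff_of_eq (true_and _)

theorem rootVars_subset_of_valid_full {W : Type} [Nontrivial W] {σ τ : SP Unit}
    (h : (full W).Valid (σ, τ)) : τ.rootVars ⊆ σ.rootVars := by
  obtain ⟨a, b, hab⟩ := exists_pair_ne W
  have hσ : (full W).truth (fun x => {w | w = a → x ∈ σ.rootVars}) σ a :=
    truth_full_iff.2 ⟨fun x hx _ => hx, fun S _ => ⟨b, fun x _ hba => (hab hba.symm).elim⟩⟩
  exact fun x hx => (truth_full_iff.1 (h _ a hσ)).1 x hx rfl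

theorem exists_superset_mem_diaVars_of_valid_full {T : Finset ℕ} [Nonempty T] {σ τ : SP Unit}
    (h : (full T).Valid (σ, τ)) {Q : Finset ℕ} (hQ : Q ∈ τ.diaVars) (hTQ : T ⊆ Q) :
    ∃ S ∈ σ.d.diaVars, T ⊆ S := by
  by_contra! hT
  have hmiss : ∀ S ∈ σ.d.diaVars, ∃ t : T, ∀ x ∈ S, x ≠ t.1 := by
    intro S hS
    obtain ⟨t, ht, htS⟩ := Finset.not_subset.1 (hT S hS)
    exact ⟨⟨t, ht⟩, by rintro _ hx rfl; exact htS hx⟩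
  obtain ⟨t₀, ht₀⟩ := hmiss σ.rootVars (Finset.mem_insert_self _ _)
  have hσ : (full T).truth (fun x => {t : T | x ≠ t.1}) σ t₀ :=
    truth_full_iff.2 ⟨ht₀, fun S hS => hmiss S (Finset.mem_insert_of_mem hS)⟩
  obtain ⟨u, hu⟩ := (truth_full_iff.1 (h _ t₀ hσ)).2 Q hQ
  exact hu u (hTQ u.2) rfl

end Full

end KFrame

theorem SLOCons.krCons {Sig : Type} {Ax : Set (SPImp Sig)} {ι : SPImp Sig} (h : SLOCons Ax ι) :
    KrCons Ax ι :=
  fun F hF => KFrame.valid_cmpl.1 (h F.cmpl (KFrame.validSet_cmpl.2 hF))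

theorem KrCons.sloCons_ecEquiv_union_eFun {n : ℕ} (hn : 2 ≤ n) {ι : SPImp Unit}
    (h : KrCons (ecEquiv ∪ {eFun n}) ι) : SLOCons (ecEquiv ∪ {eFun n}) ι := by
  intro A hA
  obtain ⟨hequiv, hfun⟩ := SLO.validSet_union_singleton.1 hA
  refine SLO.eval_le_eval_of_subset hfun hequiv ?_ fun Q hQ T hTQ hT => ?_
  · exact KFrame.rootVars_subset_of_valid_full
      (h (KFrame.full Bool) (KFrame.validSet_full (by simpa using hn)))
  · rcases T.eq_empty_or_nonempty with rfl | hne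
    · exact ⟨ι.1.rootVars, Finset.mem_insert_self _ _, Finset.empty_subset _⟩
    · have : Nonempty T := hne.to_subtype
      exact KFrame.exists_superset_mem_diaVars_of_valid_full
        (h (KFrame.full T) (KFrame.validSet_full (by simpa using hT))) hQ hTQ

theorem isCompleteLogic_ecEquiv_union_eFun {n : ℕ} (hn : 2 ≤ n) :
    IsCompleteLogic (ecEquiv ∪ {eFun n}) :=
  fun _ => ⟨KrCons.sloCons_ecEquiv_union_eFun hn, SLOCons.krCons⟩

/-- For every `n ≥ 2`, the unimodal spi-logic `SPiⁿ_equiv` axiomatised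
by `Ec_equiv ∪ {e_funⁿ}` is complete. Moreover, the frames validating
`Ec_equiv ∪ {e_funⁿ}` are exactly the frames whose relation is an equivalence
relation all of whose classes have at most `n` elements. -/
theorem stmt15 (n : ℕ) (hn : 2 ≤ n) :
    IsCompleteLogic ({e_refl, e_trans, e_sym, eFun n} : Set (SPImp Unit)) ∧
    (∀ F : KFrame Unit,
      F.ValidSet ({e_refl, e_trans, e_sym, eFun n} : Set (SPImp Unit)) ↔
        (Equivalence (F.rel ()) ∧ ∀ w : F.world,
          {u : F.world | F.rel () w u}.Finite ∧
          {u : F.world | F.rel () w u}.ncard ≤ n)) := by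
  rw [← ecEquiv_union_eFun]
  refine ⟨isCompleteLogic_ecEquiv_union_eFun hn, fun F => ?_⟩
  simp only [KFrame.validSet_ecEquiv_union_eFun_iff, Set.encard_le_coe_iff_finite_ncard_le]
end
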